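/- Let F : 𝒞 → ℳ be an exact inclusion of a strong Serre subcategory admitting a right adjoint, with both 𝒞 and ℳ having enough injectives and satisfying AB4*-n for some nonnegative integer n. Then the induced functor RF : D(𝒞) → D_𝒞(ℳ) between unbounded derived categories is an equivalence. -/

import Mathlib

/-!
STATEMENT 16 (Theorem 1.4): Let `F : 𝒞 → ℳ` be an exact inclusion of a strong Serre
subcategory admitting a right adjoint, with both `𝒞` and `ℳ` having enough injectives and
satisfying AB4*-n for some nonnegative integer `n`.  Then the induced functor
`RF : D(𝒞) → D_𝒞(ℳ)` between unbounded derived categories is an equivalence.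

The equivalence is expressed, for `L = F.mapDerivedCategory`: `L` is bijective on all
morphisms (full faithfulness — `D_𝒞(ℳ)` is a full subcategory of `D(ℳ)`), and every object
of `D(ℳ)` with all cohomology in (the essential image of) `𝒞` is isomorphic to `L X` for
some `X` (essential surjectivity onto `D_𝒞(ℳ)`).
-/

open CategoryTheory Limits

universe w w' v u v' u'

/-- AB4*-`n`: the derived functors of product, computed via injective resolutions, vanish in
degrees `> n`. -/
def AB4StarMinus (C : Type u) [Category.{v} C] [Abelian C] [HasProducts.{0} C] (n : ℕ) : Prop :=
  ∀ (I : Type) (A : I → C) (R : ∀ i, InjectiveResolution (A i)) (q : ℕ), n < q →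
    IsZero ((HomologicalComplex.homologyFunctor C (ComplexShape.up ℕ) q).obj
      (∏ᶜ fun i => (R i).cocomplex))

/-- `𝒞` is a strong Serre subcategory of `ℳ` via the exact inclusion `F`. -/
def IsStrongSerre {C : Type u} [Category.{v} C] [Abelian C] [HasDerivedCategory.{w} C]
    {M : Type u'} [Category.{v'} M] [Abelian M] [HasDerivedCategory.{w'} M]
    (F : C ⥤ M) [F.Additive] [PreservesFiniteLimits F] [PreservesFiniteColimits F] : Prop :=
  ∀ (a b : C) (i : ℕ),
    Function.Bijective (fun f : ((DerivedCategory.singleFunctor C 0).obj a ⟶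
        ((DerivedCategory.singleFunctor C 0).obj b)⟦(i : ℤ)⟧) => F.mapDerivedCategory.map f)

namespace USS

open DerivedCategory

section Cplx
variable {A : Type u} [Category.{v} A] [Abelian A] [HasDerivedCategory.{w} A]

lemma Q_map_surjective (K L : CochainComplex A ℤ) [L.IsKInjective]
    (g : Q.obj K ⟶ Q.obj L) : ∃ f : K ⟶ L, Q.map f = g := by
  obtain ⟨f, hf⟩ := (CochainComplex.IsKInjective.Qh_map_bijective
    ((HomotopyCategory.quotient _ _).obj K) L).surjective
      ((quotientCompQhIso A).hom.app K ≫ g ≫ (quotientCompQhIso A).inv.app L)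
  obtain ⟨f, rfl⟩ := (HomotopyCategory.quotient _ _).map_surjective f
  refine ⟨f, ?_⟩
  have h := (quotientCompQhIso A).hom.naturality f
  rw [Functor.comp_map, hf] at h
  rw [← cancel_epi ((quotientCompQhIso A).hom.app K), ← h]
  simp

lemma homotopy_zero_of_Q_map_eq_zero {K L : CochainComplex A ℤ} [L.IsKInjective]
    (f : K ⟶ L) (hf : Q.map f = 0) : Nonempty (Homotopy f 0) := by
  refine ⟨HomotopyCategory.homotopyOfEq _ _ ?_⟩
  apply (CochainComplex.IsKInjective.Qh_map_bijective
    ((HomotopyCategory.quotient _ _).obj K) L).injective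
  have h := (quotientCompQhIso A).hom.naturality f
  rw [hf, comp_zero] at h
  rw [Functor.map_zero, Functor.map_zero]
  rw [← cancel_mono ((quotientCompQhIso A).hom.app L), zero_comp]
  exact h

lemma Q_map_eq_zero_of_homotopy {K L : CochainComplex A ℤ}
    (f : K ⟶ L) (h : Homotopy f 0) : Q.map f = 0 := by
  have h1 := HomotopyCategory.eq_of_homotopy f 0 h
  have h2 := (quotientCompQhIso A).hom.naturality f
  rw [Functor.comp_map, h1, Functor.map_zero, Functor.map_zero, zero_comp] at h2
  rw [← cancel_epi ((quotientCompQhIso A).hom.app K), ← h2, comp_zero]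

lemma exists_injective_model [EnoughInjectives A] (X : DerivedCategory A) (b : ℤ) [X.IsGE b] :
    ∃ (J : CochainComplex A ℤ), J.IsStrictlyGE b ∧ (∀ n, Injective (J.X n)) ∧
      Nonempty (Q.obj J ≅ X) := by
  obtain ⟨L, _, ⟨e⟩⟩ := DerivedCategory.exists_iso_Q_obj_of_isGE X b
  obtain ⟨J, i, h1, h2, h3⟩ := CochainComplex.Plus.modelCategoryQuillen.exists_quasiIso_injective L b
  exact ⟨J, by assumption, by assumption, ⟨(asIso (Q.map i)).symm ≪≫ e.symm⟩⟩

variable [HasProducts.{0} A]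

/-- Assemble homotopies to zero. -/
lemma homotopy_pi {I : Type} (J : I → CochainComplex A ℤ) (K : CochainComplex A ℤ)
    (f : K ⟶ ∏ᶜ J) (h : ∀ i, Nonempty (Homotopy (f ≫ Pi.π J i) 0)) :
    Nonempty (Homotopy f 0) := by
  have h' := fun i => (h i).some
  have hl : ∀ m : ℤ, IsLimit ((HomologicalComplex.eval A (ComplexShape.up ℤ) m).mapCone
      (limit.cone (Discrete.functor J))) := fun m =>
    isLimitOfPreserves _ (limit.isLimit (Discrete.functor J))
  let c (p m : ℤ) : Cone (Discrete.functor J ⋙ HomologicalComplex.eval A (ComplexShape.up ℤ) m) :=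
    { pt := K.X p
      π := Discrete.natTrans (fun i => (h' i.as).hom p m) }
  let s (p m : ℤ) : K.X p ⟶ (∏ᶜ J).X m := (hl m).lift (c p m)
  have hs : ∀ p m i, s p m ≫ (Pi.π J i).f m = (h' i).hom p m := fun p m i =>
    (hl m).fac (c p m) ⟨i⟩
  refine ⟨{ hom := s, zero := ?_, comm := ?_ }⟩
  · intro p m hpm
    apply (hl m).hom_ext
    rintro ⟨i⟩
    have := hs p m i
    rw [(h' i).zero p m hpm] at this
    exact this.trans zero_comp.symm
  · intro m
    apply (hl m).hom_ext
    rintro ⟨i⟩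
    have h1 := (h' i).comm m
    have key : f.f m ≫ (Pi.π J i).f m = (dNext m s + prevD m s + (0 : K ⟶ ∏ᶜ J).f m) ≫
        (Pi.π J i).f m := by
      rw [← HomologicalComplex.comp_f, h1, Preadditive.add_comp, Preadditive.add_comp]
      congr 1
      · congr 1
        · rw [dNext_eq s (show (ComplexShape.up ℤ).Rel m (m+1) by simp),
            dNext_eq _ (show (ComplexShape.up ℤ).Rel m (m+1) by simp)]
          simp [hs]
        · rw [prevD_eq s (show (ComplexShape.up ℤ).Rel (m-1) m by simp),
            prevD_eq _ (show (ComplexShape.up ℤ).Rel (m-1) m by simp)]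
          rw [Category.assoc, ← (Pi.π J i).comm, ← Category.assoc, hs]
      · simp
    exact key

lemma isKInjective_pi {I : Type} (J : I → CochainComplex A ℤ) [∀ i, (J i).IsKInjective] :
    (∏ᶜ J : CochainComplex A ℤ).IsKInjective where
  nonempty_homotopy_zero f hK := homotopy_pi J _ f fun _ =>
    CochainComplex.IsKInjective.nonempty_homotopy_zero _ hK

/-- `Q` sends the product of K-injectives to a product. -/
noncomputable def isLimitQPi {I : Type} (J : I → CochainComplex A ℤ)
    [∀ i, (J i).IsKInjective] :
    IsLimit (Fan.mk (Q.obj (∏ᶜ J)) (fun i => Q.map (Pi.π J i)) :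
      Fan (fun i => Q.obj (J i))) := by
  haveI := isKInjective_pi J
  have hsurj : ∀ (Z : DerivedCategory A) (g : ∀ i, Z ⟶ Q.obj (J i)),
      ∃ f : Z ⟶ Q.obj (∏ᶜ J), ∀ i, f ≫ Q.map (Pi.π J i) = g i := by
    intro Z g
    let e := Q.objObjPreimageIso Z
    choose g' hg' using fun i => Q_map_surjective _ (J i) (e.hom ≫ g i)
    refine ⟨e.inv ≫ Q.map (Pi.lift g'), fun i => ?_⟩
    rw [Category.assoc, ← Functor.map_comp, limit.lift_π]
    simp [hg']
  have hinj : ∀ (Z : DerivedCategory A) (f : Z ⟶ Q.obj (∏ᶜ J)),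
      (∀ i, f ≫ Q.map (Pi.π J i) = 0) → f = 0 := by
    intro Z f hf
    let e := Q.objObjPreimageIso Z
    obtain ⟨f', hf'⟩ := Q_map_surjective _ _ (e.hom ≫ f)
    rw [← cancel_epi e.hom, ← hf', comp_zero]
    obtain ⟨h⟩ := homotopy_pi J _ f' (fun i => homotopy_zero_of_Q_map_eq_zero _ (by
      rw [Functor.map_comp, hf', Category.assoc, hf, comp_zero]))
    exact Q_map_eq_zero_of_homotopy _ h
  refine Fan.IsLimit.mk _ (fun s => (hsurj _ (fun i => s.proj i)).choose)
    (fun s i => (hsurj _ (fun i => s.proj i)).choose_spec i) ?_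
  intro s m hm
  rw [← sub_eq_zero]
  apply hinj
  intro i
  have h1 := (hsurj _ (fun i => s.proj i)).choose_spec i
  rw [Preadditive.sub_comp, h1, sub_eq_zero]
  exact hm i

end Cplx
end USS

namespace USS

open DerivedCategory

section Cplx2
variable {A : Type u} [Category.{v} A] [Abelian A]

lemma restriction_exactAt_iff (J : CochainComplex A ℤ) (b : ℤ) (q : ℕ) :
    (J.restriction (ComplexShape.embeddingUpIntGE b)).ExactAt (q + 1) ↔
      J.ExactAt (b + (q + 1)) := by
  rw [HomologicalComplex.exactAt_iff' _ q (q+1) (q+2) (by simp) (by simp),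
    HomologicalComplex.exactAt_iff' _ (b+q) (b+(q+1)) (b+(q+2)) (by simp; lia) (by simp; lia)]
  exact ShortComplex.exact_iff_of_iso (HomologicalComplex.restriction.sc'Iso J
    (ComplexShape.embeddingUpIntGE b) q (q+1) (q+2) (by simp) (by simp) (by simp)
    (by simp; lia) (by simp; lia))

/-- A complex of injectives which is exact in positive degrees is an injective resolution. -/
noncomputable def injRes (K : CochainComplex A ℕ) (hK : ∀ n, Injective (K.X n))
    (hex : ∀ q, K.ExactAt (q + 1)) : InjectiveResolution (kernel (K.d 0 1)) where
  cocomplex := K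
  injective := hK
  ι := (CochainComplex.fromSingle₀Equiv _ _).symm ⟨kernel.ι _, kernel.condition _⟩
  quasiIso := ⟨fun n => by
    cases n
    · rw [CochainComplex.quasiIsoAt₀_iff, ShortComplex.quasiIso_iff_of_zeros]
      · refine (ShortComplex.exact_and_mono_f_iff_of_iso ?_).2
          ⟨ShortComplex.exact_kernel (K.d 0 1), by dsimp; infer_instance⟩
        exact ShortComplex.isoMk (Iso.refl _) (Iso.refl _) (Iso.refl _)
          (by simp; exact (Category.id_comp _).trans (Category.comp_id _).symm)
          (by simp; exact (Category.id_comp _).trans (Category.comp_id _).symm)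
      · rfl
      · rfl
      · simp; rfl
    · rw [quasiIsoAt_iff_exactAt]
      · apply hex
      · apply CochainComplex.exactAt_succ_single_obj⟩

variable [HasProducts.{0} A]

/-- restriction of a product -/
noncomputable def isLimitRestrPi {I : Type} (J : I → CochainComplex A ℤ) (b : ℤ) :
    IsLimit (Fan.mk ((∏ᶜ J).restriction (ComplexShape.embeddingUpIntGE b))
      (fun i => HomologicalComplex.restrictionMap (Pi.π J i) (ComplexShape.embeddingUpIntGE b)) :
      Fan (fun i => (J i).restriction (ComplexShape.embeddingUpIntGE b))) := by
  apply HomologicalComplex.isLimitOfEval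
  intro m
  have hl : IsLimit ((HomologicalComplex.eval A (ComplexShape.up ℤ) (b + m)).mapCone
      (limit.cone (Discrete.functor J))) := 
    isLimitOfPreserves _ (limit.isLimit (Discrete.functor J))
  have hl' := isLimitMapConeFanMkEquiv (HomologicalComplex.eval A (ComplexShape.up ℤ) (b + m)) _ _ |>.toFun (isLimitOfPreserves (HomologicalComplex.eval A (ComplexShape.up ℤ) (b + m)) (productIsProduct J))
  exact (isLimitMapConeFanMkEquiv (HomologicalComplex.eval A (ComplexShape.up ℕ) m) _ _).symm hl'

lemma pi_exactAt {n : ℕ} (hA : AB4StarMinus A n) {I : Type} (J : I → CochainComplex A ℤ)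
    (hJ : ∀ i m, Injective ((J i).X m)) (b : ℤ) (hb : ∀ i m, b < m → (J i).ExactAt m)
    (m : ℤ) (hm : b + n < m) : (∏ᶜ J : CochainComplex A ℤ).ExactAt m := by
  obtain ⟨q, rfl⟩ : ∃ q : ℕ, m = b + (q + 1) := ⟨(m - b - 1).toNat, by lia⟩
  rw [← restriction_exactAt_iff]
  let e := ComplexShape.embeddingUpIntGE b
  let R : ∀ i, InjectiveResolution _ := fun i => injRes ((J i).restriction e)
    (fun k => hJ i _) (fun q => by
      rw [restriction_exactAt_iff]
      exact hb i _ (by lia))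
  have h := hA I _ R (q+1) (by lia)
  let f : (∏ᶜ fun i => (R i).cocomplex) ≅ (∏ᶜ J).restriction e :=
    (productIsProduct _).conePointUniqueUpToIso (isLimitRestrPi J b)
  rw [HomologicalComplex.exactAt_iff_isZero_homology]
  exact h.of_iso ((HomologicalComplex.homologyFunctor A (ComplexShape.up ℕ) (q+1)).mapIso f).symm
end Cplx2

section
variable {A : Type u} [Category.{v} A] [Abelian A] [HasDerivedCategory.{w} A]
variable [HasProducts.{0} A] [EnoughInjectives A]

/-- Bounded below. -/
def Bb (X : DerivedCategory A) : Prop := ∃ b : ℤ, X.IsGE b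

lemma exists_pi {I : Type} (X : I → DerivedCategory A) (hX : ∀ i, Bb (X i)) :
    ∃ (J : I → CochainComplex A ℤ), (∀ i m, Injective ((J i).X m)) ∧
      (∀ i, (J i).IsKInjective) ∧ Nonempty (∀ i, Q.obj (J i) ≅ X i) := by
  choose b hb using hX
  choose J h1 h2 h3 using fun i => exists_injective_model (X i) (b i)
  refine ⟨J, h2, fun i => ?_, ⟨fun i => (h3 i).some⟩⟩
  have := h1 i
  have := h2 i
  exact CochainComplex.isKInjective_of_injective (J i) (b i)

lemma hasProduct_of_bb {I : Type} (X : I → DerivedCategory A) (hX : ∀ i, Bb (X i)) :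
    HasProduct X := by
  obtain ⟨J, h1, h2, ⟨e⟩⟩ := exists_pi X hX
  have : HasProduct (fun i => Q.obj (J i)) := ⟨⟨⟨_, isLimitQPi J⟩⟩⟩
  exact hasLimit_of_iso (Discrete.natIso (fun i => e i.as) :
    Discrete.functor (fun i => Q.obj (J i)) ≅ Discrete.functor X)

lemma pi_isLE {n : ℕ} (hA : AB4StarMinus A n) {I : Type} (X : I → DerivedCategory A)
    (hX : ∀ i, Bb (X i)) [HasProduct X] (b : ℤ) (hb : ∀ i, (X i).IsLE b) :
    (∏ᶜ X).IsLE (b + n) := by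
  obtain ⟨J, h1, h2, ⟨e⟩⟩ := exists_pi X hX
  have : HasProduct (fun i => Q.obj (J i)) := ⟨⟨⟨_, isLimitQPi J⟩⟩⟩
  let f : ∏ᶜ X ≅ Q.obj (∏ᶜ J) := (HasLimit.isoOfNatIso (Discrete.natIso (fun i => e i.as) :
    Discrete.functor (fun i => Q.obj (J i)) ≅ Discrete.functor X)).symm ≪≫
    (productIsProduct _).conePointUniqueUpToIso (isLimitQPi J)
  have : (Q.obj (∏ᶜ J)).IsLE (b + n) := by
    rw [isLE_Q_obj_iff, CochainComplex.isLE_iff]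
    intro m hm
    refine pi_exactAt hA J h1 b ?_ m hm
    intro i m hm
    have h3 : (Q.obj (J i)).IsLE b := by
      have := hb i
      exact TStructure.t.isLE_of_iso (e i).symm b
    rw [isLE_Q_obj_iff, CochainComplex.isLE_iff] at h3
    exact h3 m hm
  exact TStructure.t.isLE_of_iso f.symm _
end
end USS

namespace USS

open DerivedCategory Pretriangulated

section Theta
variable {C : Type u} [Category.{v} C] [Abelian C] [HasDerivedCategory.{w} C]
    {M : Type u'} [Category.{v'} M] [Abelian M] [HasDerivedCategory.{w'} M]
    (F : C ⥤ M) [F.Additive] [PreservesFiniteLimits F] [PreservesFiniteColimits F]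

/-- Exact functors commute with homology of complexes. -/
noncomputable def thetaCplx (k : ℤ) :
    F.mapHomologicalComplex (ComplexShape.up ℤ) ⋙
      HomologicalComplex.homologyFunctor M (ComplexShape.up ℤ) k ≅
    HomologicalComplex.homologyFunctor C (ComplexShape.up ℤ) k ⋙ F :=
  NatIso.ofComponents (fun K => (K.sc k).mapHomologyIso F)
    (fun {K L} f => ShortComplex.mapHomologyIso_hom_naturality
      ((HomologicalComplex.shortComplexFunctor C (ComplexShape.up ℤ) k).map f) F)

/-- Exact functors commute with homology in the derived category. -/
noncomputable def theta (k : ℤ) :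
    F.mapDerivedCategory ⋙ homologyFunctor M k ≅ homologyFunctor C k ⋙ F :=
  Localization.liftNatIso Q
    (HomologicalComplex.quasiIso C (ComplexShape.up ℤ))
    (Q ⋙ F.mapDerivedCategory ⋙ homologyFunctor M k) (Q ⋙ homologyFunctor C k ⋙ F) _ _
    ((Functor.associator _ _ _).symm ≪≫
      Functor.isoWhiskerRight F.mapDerivedCategoryFactors _ ≪≫
      Functor.associator _ _ _ ≪≫
      Functor.isoWhiskerLeft _ (homologyFunctorFactors M k) ≪≫ thetaCplx F k ≪≫
      (Functor.isoWhiskerRight (homologyFunctorFactors C k) F).symm ≪≫ Functor.associator _ _ _)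

end Theta

section FB
variable {C : Type u} [Category.{v} C] [Abelian C] [HasDerivedCategory.{w} C]
    {M : Type u'} [Category.{v'} M] [Abelian M] [HasDerivedCategory.{w'} M]
    {F : C ⥤ M} {Φ : DerivedCategory C ⥤ DerivedCategory M}

lemma isIso_homology_iff (θ : ∀ k, Φ ⋙ homologyFunctor M k ≅ homologyFunctor C k ⋙ F)
    [F.ReflectsIsomorphisms] {X Y : DerivedCategory C} (f : X ⟶ Y) (k : ℤ) :
    IsIso ((homologyFunctor M k).map (Φ.map f)) ↔ IsIso ((homologyFunctor C k).map f) := by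
  have h1 := NatIso.isIso_map_iff (θ k) f
  exact h1.trans ⟨fun (h : IsIso (F.map ((homologyFunctor C k).map f))) => isIso_of_reflects_iso _ F,
    fun h => by dsimp; infer_instance⟩

lemma isIso_of_isIso_map (θ : ∀ k, Φ ⋙ homologyFunctor M k ≅ homologyFunctor C k ⋙ F)
    [F.ReflectsIsomorphisms] {X Y : DerivedCategory C} (f : X ⟶ Y)
    [IsIso (Φ.map f)] : IsIso f := by
  rw [DerivedCategory.isIso_iff]
  intro k
  rw [← isIso_homology_iff θ]
  infer_instance

lemma isGE_map (θ : ∀ k, Φ ⋙ homologyFunctor M k ≅ homologyFunctor C k ⋙ F)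
    [F.PreservesZeroMorphisms] (X : DerivedCategory C) (b : ℤ) [X.IsGE b] :
    (Φ.obj X).IsGE b := by
  rw [isGE_iff]
  intro i hi
  exact (F.map_isZero (isZero_of_isGE X b i hi)).of_iso ((θ i).app X)

lemma isLE_map (θ : ∀ k, Φ ⋙ homologyFunctor M k ≅ homologyFunctor C k ⋙ F)
    [F.PreservesZeroMorphisms] (X : DerivedCategory C) (b : ℤ) [X.IsLE b] :
    (Φ.obj X).IsLE b := by
  rw [isLE_iff]
  intro i hi
  exact (F.map_isZero (isZero_of_isLE X b i hi)).of_iso ((θ i).app X)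

end FB

section FB2
variable {C : Type u} [Category.{v} C] 
    {M : Type u'} [Category.{v'} M] 
    (Φ : C ⥤ M)

/-- `Φ` is bijective on `Hom(X,Y)`. -/
def FB (X Y : C) : Prop := Function.Bijective (fun f : X ⟶ Y => Φ.map f)

variable {Φ}
lemma FB.of_iso {X Y X' Y' : C} (h : FB Φ X Y) (e : X ≅ X') (e' : Y ≅ Y') : FB Φ X' Y' := by
  constructor
  · intro f g hfg
    dsimp at hfg
    have : e.hom ≫ f ≫ e'.inv = e.hom ≫ g ≫ e'.inv := by
      apply h.1
      simp [hfg]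
    simpa using this
  · intro f
    obtain ⟨g, hg⟩ := h.2 (Φ.map e.hom ≫ f ≫ Φ.map e'.inv)
    dsimp at hg
    refine ⟨e.inv ≫ g ≫ e'.hom, ?_⟩
    simp only [Functor.map_comp, hg]
    simp only [Category.assoc, ← Φ.map_comp, Iso.inv_hom_id]
    simp [← Φ.map_comp_assoc]

lemma FB.shift [HasShift C ℤ] [HasShift M ℤ] [Φ.CommShift ℤ] {X Y : C} (h : FB Φ X Y) (i : ℤ) :
    FB Φ (X⟦i⟧) (Y⟦i⟧) := by
  have nat : ∀ g : X ⟶ Y, Φ.map (g⟦i⟧') = (Φ.commShiftIso i).hom.app X ≫ (Φ.map g)⟦i⟧' ≫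
      (Φ.commShiftIso i).inv.app Y := by
    intro g
    have := (Φ.commShiftIso i).hom.naturality g
    dsimp at this
    rw [← reassoc_of% this]
    simp
  constructor
  · intro f g hfg
    obtain ⟨f, rfl⟩ := (shiftFunctor C i).map_surjective f
    obtain ⟨g, rfl⟩ := (shiftFunctor C i).map_surjective g
    dsimp at hfg
    rw [nat, nat, cancel_epi, cancel_mono] at hfg
    rw [h.1 ((shiftFunctor M i).map_injective hfg)]
  · intro f
    obtain ⟨g, hg⟩ := (shiftFunctor M i).map_surjective
      ((Φ.commShiftIso i).inv.app X ≫ f ≫ (Φ.commShiftIso i).hom.app Y)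
    obtain ⟨g, rfl⟩ := h.2 g
    refine ⟨g⟦i⟧', ?_⟩
    dsimp at hg ⊢
    rw [nat, hg]
    simp

lemma FB.of_shift [HasShift C ℤ] [HasShift M ℤ] [Φ.CommShift ℤ] {X Y : C} (i : ℤ)
    (h : FB Φ (X⟦i⟧) (Y⟦i⟧)) : FB Φ X Y :=
  (h.shift (-i)).of_iso (shiftShiftNeg X i) (shiftShiftNeg Y i)

/-- `Φ` is bijective on `Hom(-,Y)`. -/
def WW (Φ : C ⥤ M) (Y : C) : Prop := ∀ Z, FB Φ Z Y

/-- universal arrows -/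
def Univ (Φ : C ⥤ M) {X : C} {Y : M} (ε : Φ.obj X ⟶ Y) : Prop :=
  ∀ Z, Function.Bijective (fun f : Z ⟶ X => Φ.map f ≫ ε)

lemma Univ.ww {X : C} {Y : M} {ε : Φ.obj X ⟶ Y} (h : Univ Φ ε) [IsIso ε] : WW Φ X := by
  intro Z
  constructor
  · intro f g hfg
    dsimp at hfg
    apply (h Z).1
    dsimp
    rw [hfg]
  · intro f
    obtain ⟨g, hg⟩ := (h Z).2 (f ≫ ε)
    exact ⟨g, (cancel_mono ε).1 hg⟩

lemma WW.of_iso {X Y : C} (h : WW Φ X) (e : X ≅ Y) : WW Φ Y :=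
  fun Z => (h Z).of_iso (Iso.refl _) e

lemma WW.shift [HasShift C ℤ] [HasShift M ℤ] [Φ.CommShift ℤ] {X : C} (h : WW Φ X) (i : ℤ) :
    WW Φ (X⟦i⟧) :=
  fun Z => ((h (Z⟦-i⟧)).shift i).of_iso (shiftNegShift Z i) (Iso.refl _)

lemma WW.univ {X : C} {Y : M} (h : WW Φ X) (e : Φ.obj X ≅ Y) : Univ Φ e.hom := by
  intro Z
  constructor
  · intro f g hfg
    dsimp at hfg
    rw [cancel_mono] at hfg
    exact (h Z).1 hfg
  · intro f
    obtain ⟨g, hg⟩ := (h Z).2 (f ≫ e.inv)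
    dsimp at hg
    exact ⟨g, by simp [hg]⟩

end FB2
end USS

namespace USS

open DerivedCategory Pretriangulated

section LemmaC
variable {C : Type u} [Category.{v} C] [Abelian C]
    {M : Type u'} [Category.{v'} M] [Abelian M]
    {F : C ⥤ M} [F.Additive] {G : M ⥤ C} [G.Additive] (adj : F ⊣ G)

/-- degreewise counit -/
def cplxCounit (J : CochainComplex M ℤ) :
    (F.mapHomologicalComplex (ComplexShape.up ℤ)).obj
      ((G.mapHomologicalComplex (ComplexShape.up ℤ)).obj J) ⟶ J where
  f i := adj.counit.app (J.X i)
  comm' i j _ := (adj.counit.naturality (J.d i j)).symm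

/-- degreewise unit -/
def cplxUnit (K : CochainComplex C ℤ) :
    K ⟶ (G.mapHomologicalComplex (ComplexShape.up ℤ)).obj
      ((F.mapHomologicalComplex (ComplexShape.up ℤ)).obj K) where
  f i := adj.unit.app (K.X i)
  comm' i j _ := (adj.unit.naturality (K.d i j)).symm

lemma cplx_adj1 {K : CochainComplex C ℤ} {J : CochainComplex M ℤ}
    (g : (F.mapHomologicalComplex (ComplexShape.up ℤ)).obj K ⟶ J) :
    (F.mapHomologicalComplex (ComplexShape.up ℤ)).map
      (cplxUnit adj K ≫ (G.mapHomologicalComplex (ComplexShape.up ℤ)).map g) ≫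
      cplxCounit adj J = g := by
  ext i
  have : ∀ {a : C} {b : M} (g : F.obj a ⟶ b),
      F.map (adj.unit.app a ≫ G.map g) ≫ adj.counit.app b = g := by
    intro a b g
    simp
  exact this (g.f i)

lemma cplx_adj2 {K : CochainComplex C ℤ} {J : CochainComplex M ℤ}
    (f : K ⟶ (G.mapHomologicalComplex (ComplexShape.up ℤ)).obj J) :
    cplxUnit adj K ≫ (G.mapHomologicalComplex (ComplexShape.up ℤ)).map
      ((F.mapHomologicalComplex (ComplexShape.up ℤ)).map f ≫ cplxCounit adj J) = f := by
  ext i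
  have : ∀ {a : C} {b : M} (f : a ⟶ G.obj b),
      adj.unit.app a ≫ G.map (F.map f ≫ adj.counit.app b) = f := by
    intro a b f
    simp
  exact this (f.f i)

end LemmaC

section LemmaC2
variable {C : Type u} [Category.{v} C] [Abelian C] [HasDerivedCategory.{w} C]
    {M : Type u'} [Category.{v'} M] [Abelian M] [EnoughInjectives M] [HasDerivedCategory.{w'} M]
    {F : C ⥤ M} [F.Additive] [PreservesFiniteLimits F] [PreservesFiniteColimits F]

lemma exists_univ {G : M ⥤ C} (adj : F ⊣ G) (Y : DerivedCategory M) (b : ℤ) [Y.IsGE b] :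
    ∃ (X : DerivedCategory C) (ε : F.mapDerivedCategory.obj X ⟶ Y),
      Univ F.mapDerivedCategory ε := by
  have : G.Additive := adj.right_adjoint_additive
  obtain ⟨J, hJ1, hJ2, ⟨eY⟩⟩ := exists_injective_model Y b
  have hK : J.IsKInjective := CochainComplex.isKInjective_of_injective J b
  let GJ : CochainComplex C ℤ := (G.mapHomologicalComplex (ComplexShape.up ℤ)).obj J
  have hG1 : GJ.IsStrictlyGE b := inferInstance
  have hG2 : ∀ n, Injective (GJ.X n) := fun n => by
    exact adj.map_injective _ (hJ2 n)
  have hGK : GJ.IsKInjective := CochainComplex.isKInjective_of_injective GJ b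
  have key : ∀ {K : CochainComplex C ℤ} (f0 : K ⟶ GJ),
      F.mapDerivedCategory.map (Q.map f0) ≫ F.mapDerivedCategoryFactors.hom.app GJ ≫
        Q.map (cplxCounit adj J) = F.mapDerivedCategoryFactors.hom.app K ≫
          Q.map ((F.mapHomologicalComplex (ComplexShape.up ℤ)).map f0 ≫ cplxCounit adj J) := by
    intro K f0
    rw [Q.map_comp]
    exact F.mapDerivedCategoryFactors.hom.naturality_assoc f0 _
  refine ⟨Q.obj GJ, F.mapDerivedCategoryFactors.hom.app GJ ≫ Q.map (cplxCounit adj J) ≫ eY.hom,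
    fun Z => ?_⟩
  let K := Q.objPreimage Z
  let e : Q.obj K ≅ Z := Q.objObjPreimageIso Z
  constructor
  · intro f g hfg
    rw [← sub_eq_zero] at hfg ⊢
    dsimp only at hfg
    rw [← Preadditive.sub_comp, ← Functor.map_sub] at hfg
    generalize f - g = f at hfg ⊢
    obtain ⟨f0, hf0⟩ := Q_map_surjective K GJ (e.hom ≫ f)
    have hf : f = e.inv ≫ Q.map f0 := by simp [hf0]
    have h1 : Q.map ((F.mapHomologicalComplex (ComplexShape.up ℤ)).map f0 ≫
        cplxCounit adj J) = 0 := by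
      rw [← cancel_epi (F.mapDerivedCategoryFactors.hom.app K), ← key, comp_zero, hf0,
        Functor.map_comp, ← cancel_mono eY.hom, Category.assoc, Category.assoc, Category.assoc, hfg]
      simp
    obtain ⟨h⟩ := homotopy_zero_of_Q_map_eq_zero _ h1
    have h2 := (G.mapHomotopy h).compLeft (cplxUnit adj K)
    rw [cplx_adj2, Functor.map_zero, comp_zero] at h2
    rw [hf, Q_map_eq_zero_of_homotopy _ h2, comp_zero]
  · intro g
    obtain ⟨g0, hg0⟩ := Q_map_surjective ((F.mapHomologicalComplex (ComplexShape.up ℤ)).obj K) J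
      (F.mapDerivedCategoryFactors.inv.app K ≫ F.mapDerivedCategory.map e.hom ≫ g ≫ eY.inv)
    refine ⟨e.inv ≫ Q.map (cplxUnit adj K ≫
      (G.mapHomologicalComplex (ComplexShape.up ℤ)).map g0), ?_⟩
    dsimp only
    have h3 := key (cplxUnit adj K ≫ (G.mapHomologicalComplex (ComplexShape.up ℤ)).map g0)
    rw [cplx_adj1, hg0] at h3
    have h4 := congr(F.mapDerivedCategory.map e.inv ≫ $h3 ≫ eY.hom)
    simp only [Category.assoc] at h4
    rw [Functor.map_comp, Category.assoc, h4]
    simp only [Iso.inv_hom_id, Category.comp_id, Iso.hom_inv_id_app_assoc]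
    rw [← Functor.map_comp_assoc]
    simp
end LemmaC2
end USS

namespace USS

open DerivedCategory Pretriangulated

section Five
variable {C : Type u} [Category.{v} C] [Preadditive C] [HasZeroObject C] [HasShift C ℤ]
    [∀ n : ℤ, (shiftFunctor C n).Additive] [Pretriangulated C]
    {M : Type u'} [Category.{v'} M] [Preadditive M] [HasZeroObject M] [HasShift M ℤ]
    [∀ n : ℤ, (shiftFunctor M n).Additive] [Pretriangulated M]
    {Φ : C ⥤ M} [Φ.CommShift ℤ]

lemma Univ.shift {X : C} {Y : M} {ε : Φ.obj X ⟶ Y} (h : Univ Φ ε) (i : ℤ) :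
    Univ Φ ((Φ.commShiftIso i).hom.app X ≫ ε⟦i⟧') := by
  intro Z
  let e := shiftNegShift Z i
  have nat : ∀ f : Z⟦-i⟧ ⟶ X, Φ.map (e.inv ≫ f⟦i⟧') ≫ (Φ.commShiftIso i).hom.app X ≫ ε⟦i⟧' =
      Φ.map e.inv ≫ (Φ.commShiftIso i).hom.app _ ≫ (Φ.map f ≫ ε)⟦i⟧' := by
    intro f
    have := (Φ.commShiftIso i).hom.naturality_assoc f (ε⟦i⟧')
    dsimp at this
    simp [this]
  have surj : ∀ f : Z ⟶ X⟦i⟧, ∃ f0 : Z⟦-i⟧ ⟶ X, f = e.inv ≫ f0⟦i⟧' := by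
    intro f
    obtain ⟨f0, hf0⟩ := (shiftFunctor C i).map_surjective (e.hom ≫ f)
    exact ⟨f0, by simp [hf0]⟩
  constructor
  · intro f g hfg
    obtain ⟨f, rfl⟩ := surj f
    obtain ⟨g, rfl⟩ := surj g
    dsimp only at hfg
    rw [nat, nat, cancel_epi, cancel_epi] at hfg
    rw [(h _).1 ((shiftFunctor M i).map_injective hfg)]
  · intro f
    obtain ⟨g, hg⟩ := (shiftFunctor M i).map_surjective
      ((Φ.commShiftIso i).inv.app _ ≫ Φ.map e.hom ≫ f)
    obtain ⟨g, rfl⟩ := (h _).2 g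
    refine ⟨e.inv ≫ g⟦i⟧', ?_⟩
    dsimp only at hg ⊢
    rw [nat, hg]
    simp [← Φ.map_comp_assoc]

lemma Univ.of_shift {X : C} {Y : M} {ε : Φ.obj X ⟶ Y} (i : ℤ)
    (h : Univ Φ ((Φ.commShiftIso i).hom.app X ≫ ε⟦i⟧')) : Univ Φ ε := by
  intro Z
  have nat : ∀ f : Z ⟶ X, (Φ.commShiftIso i).hom.app Z ≫ (Φ.map f ≫ ε)⟦i⟧' = 
      Φ.map (f⟦i⟧') ≫ (Φ.commShiftIso i).hom.app X ≫ ε⟦i⟧' := by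
    intro f
    have := (Φ.commShiftIso i).hom.naturality_assoc f (ε⟦i⟧')
    dsimp at this
    simp [this]
  constructor
  · intro f g hfg
    dsimp only at hfg
    apply (shiftFunctor C i).map_injective
    apply (h _).1
    dsimp only
    rw [← nat, ← nat, hfg]
  · intro f
    obtain ⟨g, hg⟩ := (h (Z⟦i⟧)).2 ((Φ.commShiftIso i).hom.app Z ≫ f⟦i⟧')
    obtain ⟨g, rfl⟩ := (shiftFunctor C i).map_surjective g
    refine ⟨g, ?_⟩
    dsimp only at hg ⊢
    rw [← nat, cancel_epi] at hg
    exact (shiftFunctor M i).map_injective hg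

lemma Univ.eq_zero {X : C} {Y : M} {ε : Φ.obj X ⟶ Y} (h : Univ Φ ε) [Φ.Additive] {Z : C}
    (f : Z ⟶ X) (hf : Φ.map f ≫ ε = 0) : f = 0 :=
  (h Z).1 (by simp [hf])

lemma univ₃ [Φ.Additive] {T : Triangle C} (hT : T ∈ distTriang C)
    {T' : Triangle M} (hT' : T' ∈ distTriang M)
    (α : Φ.obj T.obj₁ ⟶ T'.obj₁) (β : Φ.obj T.obj₂ ⟶ T'.obj₂) (γ : Φ.obj T.obj₃ ⟶ T'.obj₃)
    (c1 : Φ.map T.mor₁ ≫ β = α ≫ T'.mor₁) (c2 : Φ.map T.mor₂ ≫ γ = β ≫ T'.mor₂)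
    (c3 : Φ.map T.mor₃ ≫ (Φ.commShiftIso (1 : ℤ)).hom.app T.obj₁ ≫ α⟦(1 : ℤ)⟧' = γ ≫ T'.mor₃)
    (hα : Univ Φ α) (hβ : Univ Φ β) : Univ Φ γ := by
  have hα1 := hα.shift 1
  have hβ1 := hβ.shift 1
  intro Z
  constructor
  · intro x x' hx
    rw [← sub_eq_zero] at hx ⊢
    dsimp only at hx
    rw [← Preadditive.sub_comp, ← Functor.map_sub] at hx
    generalize x - x' = x at hx ⊢
    have h1 : x ≫ T.mor₃ = 0 := by
      apply hα1.eq_zero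
      rw [Functor.map_comp, Category.assoc, c3, reassoc_of% hx, zero_comp]
    obtain ⟨x2, rfl⟩ := T.coyoneda_exact₃ hT x h1
    have h2 : (Φ.map x2 ≫ β) ≫ T'.mor₂ = 0 := by
      rw [Category.assoc, ← c2, ← Functor.map_comp_assoc, hx]
    obtain ⟨y1, hy1⟩ := T'.coyoneda_exact₂ hT' _ h2
    obtain ⟨x1, rfl⟩ := (hα Z).2 y1
    have h3 : x2 = x1 ≫ T.mor₁ := by
      apply (hβ Z).1
      dsimp only at hy1 ⊢
      rw [hy1, Functor.map_comp, Category.assoc, Category.assoc, c1]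
    rw [h3, Category.assoc, comp_distTriang_mor_zero₁₂ _ hT, comp_zero]
  · intro y
    obtain ⟨x, hx⟩ := (hα1 Z).2 (y ≫ T'.mor₃)
    dsimp only at hx
    have h1 : x ≫ T.mor₁⟦(1 : ℤ)⟧' = 0 := by
      apply hβ1.eq_zero
      have h2 := (Φ.commShiftIso (1 : ℤ)).hom.naturality_assoc T.mor₁ (β⟦(1 : ℤ)⟧')
      dsimp at h2
      rw [Functor.map_comp, Category.assoc, h2, ← Functor.map_comp, c1, Functor.map_comp,
        ← Category.assoc, ← Category.assoc, Category.assoc (Φ.map x), hx, Category.assoc,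
        comp_distTriang_mor_zero₃₁ _ hT', comp_zero]
    obtain ⟨x3, rfl⟩ := T.coyoneda_exact₁ hT x h1
    have h2 : (y - Φ.map x3 ≫ γ) ≫ T'.mor₃ = 0 := by
      rw [Preadditive.sub_comp, ← hx, Functor.map_comp, Category.assoc, Category.assoc, c3, sub_self]
    obtain ⟨y2, hy2⟩ := T'.coyoneda_exact₃ hT' _ h2
    obtain ⟨x2, rfl⟩ := (hβ Z).2 y2
    refine ⟨x3 + x2 ≫ T.mor₂, ?_⟩
    dsimp only at hy2 ⊢
    rw [Functor.map_add, Preadditive.add_comp, Functor.map_comp, Category.assoc, c2,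
      ← Category.assoc, ← hy2]
    abel

lemma univ₁ [Φ.Additive] {T : Triangle C} (hT : T ∈ distTriang C)
    {T' : Triangle M} (hT' : T' ∈ distTriang M)
    (α : Φ.obj T.obj₁ ⟶ T'.obj₁) (β : Φ.obj T.obj₂ ⟶ T'.obj₂) (γ : Φ.obj T.obj₃ ⟶ T'.obj₃)
    (c1 : Φ.map T.mor₁ ≫ β = α ≫ T'.mor₁) (c2 : Φ.map T.mor₂ ≫ γ = β ≫ T'.mor₂)
    (c3 : Φ.map T.mor₃ ≫ (Φ.commShiftIso (1 : ℤ)).hom.app T.obj₁ ≫ α⟦(1 : ℤ)⟧' = γ ≫ T'.mor₃)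
    (hβ : Univ Φ β) (hγ : Univ Φ γ) : Univ Φ α := by
  apply Univ.of_shift 1
  refine univ₃ (rot_of_distTriang _ hT) (rot_of_distTriang _ hT') β γ
    ((Φ.commShiftIso (1 : ℤ)).hom.app T.obj₁ ≫ α⟦(1 : ℤ)⟧') c2 c3 ?_ hβ hγ
  have h2 := (Φ.commShiftIso (1 : ℤ)).hom.naturality_assoc T.mor₁ (β⟦(1 : ℤ)⟧')
  dsimp at h2
  have h3 : Φ.map (-T.mor₁⟦(1 : ℤ)⟧') ≫ (Φ.commShiftIso (1 : ℤ)).hom.app T.obj₂ ≫ β⟦(1 : ℤ)⟧' =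
      ((Φ.commShiftIso (1 : ℤ)).hom.app T.obj₁ ≫ α⟦(1 : ℤ)⟧') ≫ (-T'.mor₁⟦(1 : ℤ)⟧') := by
    rw [Functor.map_neg, Preadditive.neg_comp, h2, ← Functor.map_comp, c1]
    simp
  exact h3

lemma tri_iso {S S' X Y : C} {f : S ⟶ X} {g : X ⟶ Y} {h : Y ⟶ S⟦(1 : ℤ)⟧}
    (hT : Triangle.mk f g h ∈ distTriang C) (e : S ≅ S') :
    Triangle.mk (e.inv ≫ f) g (h ≫ e.hom⟦(1 : ℤ)⟧') ∈ distTriang C := by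
  have h1 : (e.inv ≫ f) ≫ 𝟙 X = e.inv ≫ f := Category.comp_id _
  have h2 : g ≫ 𝟙 Y = 𝟙 X ≫ g := by simp
  have h3 : (h ≫ e.hom⟦(1 : ℤ)⟧') ≫ e.inv⟦(1 : ℤ)⟧' = 𝟙 Y ≫ h := by
    rw [Category.assoc, ← Functor.map_comp]
    simp
  exact isomorphic_distinguished _ hT _ (Triangle.isoMk _ _ e.symm (Iso.refl _) (Iso.refl _)
    h1 h2 h3)

end Five

section Hom
variable {A : Type u} [Category.{v} A] [Abelian A] [HasDerivedCategory.{w} A]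

lemma isIso_H_mor₁ {T : Triangle (DerivedCategory A)} (hT : T ∈ distTriang _) (m₀ m : ℤ)
    (hm : m₀ + 1 = m)
    (h0 : IsZero ((homologyFunctor A m₀).obj T.obj₃))
    (h1 : IsZero ((homologyFunctor A m).obj T.obj₃)) :
    IsIso ((homologyFunctor A m).map T.mor₁) := by
  have e := (HomologySequence.epi_homologyMap_mor₁_iff T hT m).2 (h1.eq_of_tgt _ _)
  have e' := (HomologySequence.mono_homologyMap_mor₁_iff T hT m₀ m hm).2 (h0.eq_of_src _ _)
  exact isIso_of_mono_of_epi _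

lemma isIso_H_mor₂ {T : Triangle (DerivedCategory A)} (hT : T ∈ distTriang _) (m m₁ : ℤ)
    (hm : m + 1 = m₁)
    (h0 : IsZero ((homologyFunctor A m).obj T.obj₁))
    (h1 : IsZero ((homologyFunctor A m₁).obj T.obj₁)) :
    IsIso ((homologyFunctor A m).map T.mor₂) := by
  have e := (HomologySequence.epi_homologyMap_mor₂_iff T hT m m₁ hm).2 (h1.eq_of_tgt _ _)
  have e' := (HomologySequence.mono_homologyMap_mor₂_iff T hT m).2 (h0.eq_of_src _ _)
  exact isIso_of_mono_of_epi _

lemma isZero_H₃ {T : Triangle (DerivedCategory A)} (hT : T ∈ distTriang _) (m m₁ : ℤ)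
    (hm : m + 1 = m₁)
    (h0 : IsIso ((homologyFunctor A m).map T.mor₁))
    (h1 : IsIso ((homologyFunctor A m₁).map T.mor₁)) :
    IsZero ((homologyFunctor A m).obj T.obj₃) := by
  have e := (HomologySequence.epi_homologyMap_mor₁_iff T hT m).1 inferInstance
  have e' := (HomologySequence.mono_homologyMap_mor₁_iff T hT m m₁ hm).1 inferInstance
  exact (HomologySequence.exact₃ T hT m m₁ hm).isZero_of_both_zeros e e'

lemma isGE₃ {T : Triangle (DerivedCategory A)} (hT : T ∈ distTriang _) (b : ℤ)
    (h1 : T.obj₁.IsGE (b + 1)) (h2 : T.obj₂.IsGE b) : T.obj₃.IsGE b := 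
  TStructure.t.isGE₂ _ (rot_of_distTriang _ hT) b h2 (TStructure.t.isGE_shift _ (b + 1) 1 b)

lemma isGE₁ {T : Triangle (DerivedCategory A)} (hT : T ∈ distTriang _) (b : ℤ)
    (h2 : T.obj₂.IsGE b) (h3 : T.obj₃.IsGE (b - 1)) : T.obj₁.IsGE b := 
  TStructure.t.isGE₂ _ (inv_rot_of_distTriang _ hT) b
    (TStructure.t.isGE_shift _ (b - 1) (-1) b) h2

lemma exists_lowest (Y : DerivedCategory A) (b : ℤ) [hY : Y.IsGE b] :
    ∃ (a : A) (B : DerivedCategory A) (f : (singleFunctor A b).obj a ⟶ Y) (g : Y ⟶ B)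
      (h : B ⟶ ((singleFunctor A b).obj a)⟦(1 : ℤ)⟧),
      Triangle.mk f g h ∈ distTriang _ ∧ B.IsGE (b + 1) := by
  obtain ⟨S, B, hS, hB, f, g, h, hT⟩ := TStructure.t.exists_triangle Y b (b + 1) rfl
  have hS' : S.IsLE b := ⟨hS⟩
  have hB' : B.IsGE (b + 1) := ⟨hB⟩
  have : S.IsGE b := isGE₁ hT b hY (TStructure.t.isGE_of_ge B (b - 1) (b + 1))
  obtain ⟨a, ⟨e⟩⟩ := exists_iso_singleFunctor_obj_of_isGE_of_isLE S b
  refine ⟨a, B, e.inv ≫ f, g, h ≫ e.hom⟦(1 : ℤ)⟧', ?_, hB'⟩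
  exact tri_iso hT e

lemma isZero_of_hom_single (N : DerivedCategory A) (b : ℤ) (hN : N.IsGE b)
    (h : ∀ (i : ℤ) (a : A) (f : (singleFunctor A i).obj a ⟶ N), f = 0) : IsZero N := by
  have key : ∀ j : ℕ, N.IsGE (b + j) := by
    intro j
    induction j with
    | zero => simpa using hN
    | succ j ih =>
      obtain ⟨a, B, f, g, δ, hT, hB⟩ := exists_lowest N (b + j)
      have hf : f = 0 := h _ _ f
      have : Mono g := (Triangle.mor₁_eq_zero_iff_mono₂ _ hT).1 hf
      refine (TStructure.t.isGE_iff_orthogonal (b + j) (b + (j + 1 : ℕ)) (by push_cast; lia) N).2 ?_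
      intro Z z hZ
      rw [← cancel_mono g, zero_comp]
      exact TStructure.t.zero _ (b + j) (b + j + 1)
  rw [IsZero.iff_id_eq_zero]
  have : ∀ m, IsZero ((homologyFunctor A m).obj N) := by
    intro m
    have := key (m + 1 - b).toNat
    exact isZero_of_isGE N (b + (m + 1 - b).toNat) m (by lia)
  have : IsIso (0 : N ⟶ N) := by
    rw [DerivedCategory.isIso_iff]
    intro n
    exact ⟨0, (this n).eq_of_src _ _, (this n).eq_of_src _ _⟩
  rw [← cancel_mono (0 : N ⟶ N)]
  simp

end Hom
end USS

namespace USS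

open DerivedCategory Pretriangulated

section
variable {C : Type u} [Category.{v} C] [Abelian C] [HasDerivedCategory.{w} C]
    {M : Type u'} [Category.{v'} M] [Abelian M] [HasDerivedCategory.{w'} M]
    {F : C ⥤ M} [F.Additive]

lemma FB_single [PreservesFiniteLimits F] [PreservesFiniteColimits F]
    (hF : IsStrongSerre F) (i : ℤ) (a b : C) :
    FB F.mapDerivedCategory ((singleFunctor C i).obj a) ((singleFunctor C 0).obj b) := by
  by_cases hi : 0 ≤ i
  · obtain ⟨i, rfl⟩ := Int.eq_ofNat_of_zero_le hi
    apply FB.of_shift (i : ℤ)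
    have h : FB F.mapDerivedCategory _ _ := hF a b i
    exact h.of_iso (((singleFunctors C).shiftIso (i : ℤ) 0 i (by simp)).symm.app a) (Iso.refl _)
  · have h1 := isLE_map (theta F) ((singleFunctor C i).obj a) i
    have h2 := isGE_map (theta F) ((singleFunctor C 0).obj b) 0
    constructor
    · intro f g _
      exact (TStructure.t.zero f i 0).trans (TStructure.t.zero g i 0).symm
    · intro f
      exact ⟨0, by rw [TStructure.t.zero f i 0]; simp⟩

variable {Φ : DerivedCategory C ⥤ DerivedCategory M} [Φ.CommShift ℤ] [Φ.IsTriangulated]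

lemma univ_isGE (θ : ∀ k, Φ ⋙ homologyFunctor M k ≅ homologyFunctor C k ⋙ F)
    {X : DerivedCategory C} {Y : DerivedCategory M} {ε : Φ.obj X ⟶ Y}
    (h : Univ Φ ε) (b : ℤ) [Y.IsGE b] : X.IsGE b := by
  refine (TStructure.t.isGE_iff_orthogonal (b - 1) b (by lia) X).2 ?_
  intro Z f (hZ : Z.IsLE (b - 1))
  have := isLE_map θ Z (b - 1)
  exact h.eq_zero f (TStructure.t.zero _ (b - 1) b)

lemma single_ww (θ : ∀ k, Φ ⋙ homologyFunctor M k ≅ homologyFunctor C k ⋙ F)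
    (hS : ∀ (i : ℤ) (a b : C), FB Φ ((singleFunctor C i).obj a) ((singleFunctor C 0).obj b))
    (hU : ∀ (Y : DerivedCategory M) (b : ℤ) (_ : Y.IsGE b),
      ∃ (X : DerivedCategory C) (ε : Φ.obj X ⟶ Y), Univ Φ ε)
    (i : ℤ) (c : C) : WW Φ ((singleFunctor C i).obj c) := by
  suffices WW Φ ((singleFunctor C 0).obj c) from
    (this.shift (-i)).of_iso (((singleFunctors C).shiftIso (-i) i 0 (by simp)).app c)
  have hGE := isGE_map θ ((singleFunctor C 0).obj c) 0
  obtain ⟨X, ε, hε⟩ := hU (Φ.obj ((singleFunctor C 0).obj c)) 0 hGE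
  have hX : X.IsGE 0 := univ_isGE θ hε 0
  obtain ⟨η, hη⟩ := (hε _).2 (𝟙 _)
  dsimp only at hη
  obtain ⟨N, g, δ, hT⟩ := distinguished_cocone_triangle η
  have hN : N.IsGE (-1) := isGE₃ hT (-1) (by simpa using (inferInstance :
    ((singleFunctor C 0).obj c).IsGE 0)) (TStructure.t.isGE_of_ge X (-1) 0)
  have inj : ∀ i a (y : (singleFunctor C i).obj a ⟶ (singleFunctor C 0).obj c),
      y ≫ η = 0 → y = 0 := by
    intro i a y hy
    apply (hS i a c).1
    dsimp only
    rw [Functor.map_zero, ← Category.comp_id (Φ.map y), ← hη, ← Functor.map_comp_assoc, hy]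
    simp
  have hN0 : IsZero N := by
    refine isZero_of_hom_single N (-1) hN ?_
    intro i a f
    have h1 : f ≫ δ = 0 := by
      let e := ((singleFunctors C).shiftIso 1 i (i + 1) (by lia)).app a
      obtain ⟨y, hy⟩ := (shiftFunctor (DerivedCategory C) (1 : ℤ)).map_surjective
        (e.hom ≫ f ≫ δ)
      have h2 : y = 0 := by
        apply inj
        apply (shiftFunctor (DerivedCategory C) (1 : ℤ)).map_injective
        have h3 : δ ≫ η⟦(1 : ℤ)⟧' = 0 := comp_distTriang_mor_zero₃₁ _ hT
        rw [Functor.map_comp, hy, Category.assoc, Category.assoc, h3]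
        simp
      rw [← cancel_epi e.hom, ← hy, h2]
      simp
    obtain ⟨x, hx⟩ : ∃ x : (singleFunctor C i).obj a ⟶ X, f = x ≫ g :=
      Triangle.coyoneda_exact₃ _ hT f h1
    obtain ⟨y, hy⟩ := (hS i a c).2 (Φ.map x ≫ ε)
    dsimp only at hy
    have h4 : x = y ≫ η := by
      apply (hε _).1
      dsimp only
      rw [Functor.map_comp, Category.assoc, hη, hy, Category.comp_id]
    have h5 : η ≫ g = 0 := comp_distTriang_mor_zero₁₂ _ hT
    have hx' : f = x ≫ g := hx
    rw [hx', h4, Category.assoc, h5, comp_zero]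
  have hη' : IsIso η := (Triangle.isZero₃_iff_isIso₁ _ hT).1 hN0
  have : IsIso ε := by
    have : ε = inv (Φ.map η) := by
      rw [← cancel_epi (Φ.map η), hη]; simp
    rw [this]; infer_instance
  exact hε.ww.of_iso (asIso η).symm

lemma lemmaD (θ : ∀ k, Φ ⋙ homologyFunctor M k ≅ homologyFunctor C k ⋙ F)
    (hS : ∀ (i : ℤ) (c : C), WW Φ ((singleFunctor C i).obj c))
    (hS' : ∀ (i : ℤ) (c : C), Nonempty (Φ.obj ((singleFunctor C i).obj c) ≅
      (singleFunctor M i).obj (F.obj c)))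
    (j : ℕ) : ∀ (b : ℤ) (X : DerivedCategory C) (Y : DerivedCategory M) (_ : Y.IsGE b)
      (_ : ∀ k, F.essImage ((homologyFunctor M k).obj Y))
      (ε : Φ.obj X ⟶ Y) (_ : Univ Φ ε) (m : ℤ) (_ : m < b + j),
      IsIso ((homologyFunctor M m).map ε) := by
  induction j with
  | zero =>
    intro b X Y hY hk ε hε m hm
    have hX := univ_isGE θ hε b
    have hX' := isGE_map θ X b
    have z1 := isZero_of_isGE Y b m (by simpa using hm)
    have z2 := isZero_of_isGE (Φ.obj X) b m (by simpa using hm)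
    exact ⟨0, z2.eq_of_src _ _, z1.eq_of_src _ _⟩
  | succ j ih =>
    intro b X Y hY hk ε hε m hm
    have hX := univ_isGE θ hε b
    have hX' := isGE_map θ X b
    by_cases hmb : m < b
    · have z1 := isZero_of_isGE Y b m (by simpa using hmb)
      have z2 := isZero_of_isGE (Φ.obj X) b m (by simpa using hmb)
      exact ⟨0, z2.eq_of_src _ _, z1.eq_of_src _ _⟩
    obtain ⟨a', B, f', g', h', hT', hB⟩ := exists_lowest Y b
    have i1 : IsIso ((homologyFunctor M b).map f') := isIso_H_mor₁ hT' (b - 1) b (by lia)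
      (isZero_of_isGE B (b + 1) _ (by lia)) (isZero_of_isGE B (b + 1) _ (by lia))
    have i2 : ∀ m, b < m → IsIso ((homologyFunctor M m).map g') := fun m hm =>
      isIso_H_mor₂ hT' m (m + 1) rfl
        (isZero_of_isLE ((singleFunctor M b).obj a') b _ (by lia))
        (isZero_of_isLE ((singleFunctor M b).obj a') b _ (by lia))
    have ha' : F.essImage a' := by
      refine F.essImage.prop_of_iso ?_ (hk b)
      exact (asIso ((homologyFunctor M b).map f')).symm ≪≫
        (singleFunctorCompHomologyFunctorIso M b).app a'
    have hkB : ∀ k, F.essImage ((homologyFunctor M k).obj B) := by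
      intro k
      by_cases hkb : b < k
      · have := i2 k hkb
        exact F.essImage.prop_of_iso (asIso ((homologyFunctor M k).map g')) (hk k)
      · refine ⟨(HasZeroObject.zero (C := C)).choose, ⟨?_⟩⟩
        exact (F.map_isZero (HasZeroObject.zero (C := C)).choose_spec).iso (isZero_of_isGE B (b + 1) k (by lia))
    obtain ⟨a, ⟨ea⟩⟩ := ha'
    let A := (singleFunctor C b).obj a
    let α : Φ.obj A ≅ (singleFunctor M b).obj a' :=
      (hS' b a).some ≪≫ (singleFunctor M b).mapIso ea
    obtain ⟨f, hf⟩ := (hε A).2 (α.hom ≫ f')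
    dsimp only at hf
    obtain ⟨X'', g, h, hT⟩ := distinguished_cocone_triangle f
    obtain ⟨γ, hγ1', hγ2⟩ : ∃ γ : Φ.obj X'' ⟶ B, Φ.map g ≫ γ = ε ≫ g' ∧
        (Φ.map h ≫ (Φ.commShiftIso (1 : ℤ)).hom.app A) ≫ α.hom⟦(1 : ℤ)⟧' = γ ≫ h' :=
      complete_distinguished_triangle_morphism _ _
        (Φ.map_distinguished _ hT) hT' α.hom ε hf
    have hγ2' : Φ.map h ≫ (Φ.commShiftIso (1 : ℤ)).hom.app A ≫ α.hom⟦(1 : ℤ)⟧' = γ ≫ h' := by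
      rw [← Category.assoc]; exact hγ2
    have hγ : Univ Φ γ := univ₃ hT hT' α.hom ε γ hf hγ1' hγ2' ((hS b a).univ α) hε
    have hB3 : X''.IsGE (b + 1) := univ_isGE θ hγ (b + 1)
    have hB4 := isGE_map θ X'' (b + 1)
    have hA4 := isLE_map θ A b
    by_cases hmb' : m = b
    · subst hmb'
      have i3 : IsIso ((homologyFunctor M m).map (Φ.map f)) :=
        isIso_H_mor₁ (Φ.map_distinguished _ hT) (m - 1) m (by lia)
          (isZero_of_isGE (Φ.obj X'') (m + 1) _ (by lia))
          (isZero_of_isGE (Φ.obj X'') (m + 1) _ (by lia))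
      have h6 := congr((homologyFunctor M m).map $hf)
      rw [Functor.map_comp, Functor.map_comp] at h6
      have : IsIso ((homologyFunctor M m).map (Φ.map f) ≫ (homologyFunctor M m).map ε) := by
        rw [h6]; infer_instance
      exact IsIso.of_isIso_comp_left ((homologyFunctor M m).map (Φ.map f)) _
    · have i3 : IsIso ((homologyFunctor M m).map (Φ.map g)) :=
        isIso_H_mor₂ (Φ.map_distinguished _ hT) m (m + 1) (by lia)
          (isZero_of_isLE (Φ.obj A) b _ (by lia))
          (isZero_of_isLE (Φ.obj A) b _ (by lia))
      have i4 := i2 m (by lia)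
      have i5 := ih (b + 1) X'' B hB hkB γ hγ m (by push_cast at hm; lia)
      have h6 := congr((homologyFunctor M m).map $hγ1')
      rw [Functor.map_comp, Functor.map_comp] at h6
      have : IsIso ((homologyFunctor M m).map ε ≫ (homologyFunctor M m).map g') := by
        rw [← h6]; infer_instance
      exact IsIso.of_isIso_comp_right _ ((homologyFunctor M m).map g')

lemma lemmaD' (θ : ∀ k, Φ ⋙ homologyFunctor M k ≅ homologyFunctor C k ⋙ F)
    (hS : ∀ (i : ℤ) (c : C), WW Φ ((singleFunctor C i).obj c))
    (hS' : ∀ (i : ℤ) (c : C), Nonempty (Φ.obj ((singleFunctor C i).obj c) ≅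
      (singleFunctor M i).obj (F.obj c)))
    (hU : ∀ (Y : DerivedCategory M) (b : ℤ) (_ : Y.IsGE b),
      ∃ (X : DerivedCategory C) (ε : Φ.obj X ⟶ Y), Univ Φ ε)
    (b : ℤ) (Y : DerivedCategory M) (hY : Y.IsGE b)
    (hk : ∀ k, F.essImage ((homologyFunctor M k).obj Y)) :
    ∃ (X : DerivedCategory C), X.IsGE b ∧ WW Φ X ∧ Nonempty (Φ.obj X ≅ Y) := by
  obtain ⟨X, ε, hε⟩ := hU Y b hY
  have : IsIso ε := by
    rw [DerivedCategory.isIso_iff]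
    intro m
    exact lemmaD θ hS hS' (m + 1 - b).toNat b X Y hY hk ε hε m (by lia)
  exact ⟨X, univ_isGE θ hε b, hε.ww, ⟨asIso ε⟩⟩
end
end USS

namespace USS

open DerivedCategory Pretriangulated Opposite

section
lemma tower_solve (K : ℕ) : ∀ {A : ℕ → Type v} [∀ k, AddCommGroup (A k)]
    (f : ∀ k, A (k + 1) →+ A k) (_ : ∀ k, K ≤ k → Function.Bijective (f k))
    (y : ∀ k, A k) (w : A K), ∃! x : ∀ k, A k, (∀ k, x k - f k (x (k + 1)) = y k) ∧ x K = w := by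
  induction K with
  | zero =>
    intro A _ f hf y w
    choose g hg using fun k => (hf k (Nat.zero_le k)).2
    refine ⟨fun k => Nat.rec w (fun k xk => g k (xk - y k)) k, ⟨fun k => ?_, rfl⟩, ?_⟩
    · dsimp only
      rw [hg]
      abel
    · rintro x ⟨hx, h0⟩
      funext k
      induction k with
      | zero => exact h0
      | succ k ih =>
        apply (hf k (Nat.zero_le k)).1
        dsimp only at ih ⊢
        rw [hg, ← ih, ← hx k]
        abel
  | succ K ih =>
    intro A _ f hf y w
    obtain ⟨x, ⟨hx, h0⟩, hu⟩ := ih (A := fun k => A (k + 1)) (fun k => f (k + 1))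
      (fun k hk => hf (k + 1) (by lia)) (fun k => y (k + 1)) w
    refine ⟨fun k => match k with
      | 0 => y 0 + f 0 (x 0)
      | k + 1 => x k, ⟨?_, h0⟩, ?_⟩
    · rintro (_ | k)
      · simp
      · exact hx k
    · rintro x' ⟨hx', h0'⟩
      have h1 := hu (fun k => x' (k + 1)) ⟨fun k => hx' (k + 1), h0'⟩
      funext k
      match k with
      | 0 => 
        have := hx' 0
        dsimp only
        rw [← h1, ← this]; abel
      | k + 1 => exact congr_fun h1 k

variable {D : Type u} [Category.{v} D]

/-- transition maps of a tower -/
abbrev tr (X : ℕᵒᵖ ⥤ D) (k : ℕ) : X.obj (op (k + 1)) ⟶ X.obj (op k) :=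
  X.map (homOfLE (Nat.le_succ k)).op

variable [Preadditive D]

/-- the map `1 - shift` -/
noncomputable def dif (X : ℕᵒᵖ ⥤ D) [HasProduct (fun k => X.obj (op k))] :
    (∏ᶜ fun k => X.obj (op k)) ⟶ ∏ᶜ fun k => X.obj (op k) :=
  Pi.lift (fun k => Pi.π (fun k => X.obj (op k)) k - Pi.π (fun k => X.obj (op k)) (k + 1) ≫ tr X k)

lemma dif_π (X : ℕᵒᵖ ⥤ D) [HasProduct (fun k => X.obj (op k))] (k : ℕ) :
    dif X ≫ Pi.π (fun k => X.obj (op k)) k =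
      Pi.π (fun k => X.obj (op k)) k - Pi.π (fun k => X.obj (op k)) (k + 1) ≫ tr X k := by
  simp [dif]

lemma dif_solve (X : ℕᵒᵖ ⥤ D) [HasProduct (fun k => X.obj (op k))] (K : ℕ)
    (hX : ∀ k, K ≤ k → IsIso (tr X k)) {Z : D} (y : Z ⟶ ∏ᶜ fun k => X.obj (op k))
    (w : Z ⟶ X.obj (op K)) :
    ∃! x : Z ⟶ ∏ᶜ fun k => X.obj (op k), x ≫ dif X = y ∧ x ≫ Pi.π _ K = w := by
  have hb : ∀ k, K ≤ k → Function.Bijective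
      (AddMonoidHom.mk' (fun x : Z ⟶ X.obj (op (k + 1)) => x ≫ tr X k) (by simp)) := by
    intro k hk
    have := hX k hk
    constructor
    · intro f g h
      exact (cancel_mono (tr X k)).1 h
    · intro f
      exact ⟨f ≫ inv (tr X k), by simp⟩
  obtain ⟨x, ⟨h1, h2⟩, h3⟩ := tower_solve K (A := fun k => (Z ⟶ X.obj (op k)))
    (fun k => AddMonoidHom.mk' (fun x => x ≫ tr X k) (by simp)) hb (fun k => y ≫ Pi.π _ k) w
  refine ⟨Pi.lift x, ⟨?_, by simpa using h2⟩, ?_⟩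
  · refine Pi.hom_ext _ _ fun k => ?_
    rw [Category.assoc, dif_π, ← h1 k]
    simp
  · rintro x' ⟨h4, h5⟩
    have := h3 (fun k => x' ≫ Pi.π _ k) ⟨fun k => ?_, h5⟩
    · refine Pi.hom_ext _ _ fun k => ?_
      simpa using congr_fun this k
    · dsimp
      rw [← h4, Category.assoc, dif_π]
      simp

lemma dif_split (X : ℕᵒᵖ ⥤ D) [HasProduct (fun k => X.obj (op k))] (K : ℕ)
    (hX : ∀ k, K ≤ k → IsIso (tr X k)) :
    ∃ (s : (∏ᶜ fun k => X.obj (op k)) ⟶ ∏ᶜ fun k => X.obj (op k))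
      (j : X.obj (op K) ⟶ ∏ᶜ fun k => X.obj (op k)),
      s ≫ dif X = 𝟙 _ ∧ j ≫ dif X = 0 ∧ j ≫ Pi.π _ K = 𝟙 _ ∧
      dif X ≫ s + Pi.π _ K ≫ j = 𝟙 _ := by
  obtain ⟨s, ⟨h1, h2⟩, -⟩ := dif_solve X K hX (𝟙 _) 0
  obtain ⟨j, ⟨h3, h4⟩, -⟩ := dif_solve X K hX 0 (𝟙 _)
  refine ⟨s, j, h1, h3, h4, ?_⟩
  refine (dif_solve X K hX (dif X) (Pi.π _ K)).unique ⟨?_, ?_⟩ ⟨?_, ?_⟩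
  · simp [h1, h3]
  · simp [h2, h4]
  · simp
  · simp

lemma abstract_iso {A : Type u} [Category.{v} A] [Abelian A] {L P Q X : A} {i : L ⟶ P} [Mono i]
    {d : P ⟶ P} {hid : i ≫ d = 0} (hex : (ShortComplex.mk i d hid).Exact)
    (a : P ⟶ Q) [IsIso a] (d' s : Q ⟶ Q) (had : a ≫ d' = d ≫ a) (j : X ⟶ Q) (p : Q ⟶ X)
    (hj : j ≫ d' = 0) (hjp : j ≫ p = 𝟙 _) (hd : d' ≫ s + p ≫ j = 𝟙 _) :
    IsIso (i ≫ a ≫ p) := by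
  have h0 : inv a ≫ d = d' ≫ inv a := by
    rw [IsIso.inv_comp_eq, ← Category.assoc, had]; simp
  have hl : (j ≫ inv a) ≫ d = 0 := by
    rw [Category.assoc, h0, reassoc_of% hj, zero_comp]
  have : Mono (ShortComplex.mk i d hid).f := by assumption
  have h1 : hex.lift (j ≫ inv a) hl ≫ i = j ≫ inv a := hex.lift_f _ _
  refine ⟨hex.lift (j ≫ inv a) hl, ?_, ?_⟩
  · rw [← cancel_mono i]
    simp only [Category.assoc]
    rw [h1]
    have h2 : p ≫ j = 𝟙 _ - d' ≫ s := by rw [← hd]; abel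
    rw [reassoc_of% h2]
    simp only [Preadditive.sub_comp, Preadditive.comp_sub, Category.assoc, Category.id_comp,
      IsIso.hom_inv_id, Category.comp_id]
    rw [reassoc_of% had, reassoc_of% hid]
    simp
  · rw [reassoc_of% h1]
    simpa using hjp
end

section
variable {A : Type u} [Category.{v} A] [Abelian A] [HasDerivedCategory.{w} A]
  [EnoughInjectives A] [HasProducts.{0} A]

lemma Bb.shift {X : DerivedCategory A} (h : Bb X) (a : ℤ) : Bb (X⟦a⟧) := by
  obtain ⟨b, hb⟩ := h
  exact ⟨b - a, TStructure.t.isGE_shift X b a (b - a)⟩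

lemma Bb.cone {T : Triangle (DerivedCategory A)} (hT : T ∈ distTriang _)
    (h1 : Bb T.obj₁) (h2 : Bb T.obj₂) : Bb T.obj₃ := by
  obtain ⟨b, hb⟩ := h1
  obtain ⟨c, hc⟩ := h2
  exact ⟨min (b - 1) c, isGE₃ hT _ (TStructure.t.isGE_of_ge _ _ b)
    (TStructure.t.isGE_of_ge _ _ c)⟩

lemma pi_map_iso {n : ℕ} (hA : AB4StarMinus A n) {I : Type} {X Y : I → DerivedCategory A}
    (f : ∀ i, X i ⟶ Y i) (hX : ∀ i, Bb (X i)) (hY : ∀ i, Bb (Y i)) [HasProduct X] [HasProduct Y]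
    (b : ℤ) (hf : ∀ i m, b ≤ m → IsIso ((homologyFunctor A m).map (f i)))
    (m : ℤ) (hm : b + n + 1 ≤ m) : IsIso ((homologyFunctor A m).map (Limits.Pi.map f)) := by
  choose N g h hT using fun i => distinguished_cocone_triangle (f i)
  have hN : ∀ i, Bb (N i) := fun i => Bb.cone (hT i) (hX i) (hY i)
  have hN' : ∀ i, (N i).IsLE (b - 1) := fun i => by
    rw [isLE_iff]
    intro m hm
    exact isZero_H₃ (hT i) m (m + 1) rfl (hf i _ (by lia)) (hf i _ (by lia))
  let T := fun i => Triangle.mk (f i) (g i) (h i)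
  have p1 : HasProduct (fun i => (T i).obj₁) := hasProduct_of_bb _ hX
  have p2 : HasProduct (fun i => (T i).obj₂) := hasProduct_of_bb _ hY
  have p3 : HasProduct (fun i => (T i).obj₃) := hasProduct_of_bb _ hN
  have p4 : HasProduct (fun i => (T i).obj₁⟦(1 : ℤ)⟧) := hasProduct_of_bb _ fun i => (hX i).shift 1
  have p3' : HasProduct N := p3
  have hP := productTriangle_distinguished T hT
  have h3 : (∏ᶜ fun i => (T i).obj₃).IsLE (b - 1 + n) := pi_isLE hA _ hN _ hN'
  exact isIso_H_mor₁ hP (m - 1) m (by lia)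
    (isZero_of_isLE (∏ᶜ fun i => (T i).obj₃) (b - 1 + n) _ (by lia))
    (isZero_of_isLE (∏ᶜ fun i => (T i).obj₃) (b - 1 + n) _ (by lia))

/-- The tower truncated at stage `K`. -/
def minFun (K : ℕ) : ℕ ⥤ ℕ := (show Monotone (fun k => min k K) from fun _ _ h => by
  dsimp; lia).functor

lemma tower_iso (X : ℕᵒᵖ ⥤ DerivedCategory A) (m : ℤ) (K : ℕ)
    (hX : ∀ k, K ≤ k → IsIso ((homologyFunctor A m).map (tr X k))) :
    ∀ (k : ℕ) (h : K ≤ k), IsIso ((homologyFunctor A m).map (X.map (homOfLE h).op)) := by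
  intro k h
  induction k, h using Nat.le_induction with
  | base => 
    have : (homOfLE (le_refl K)).op = 𝟙 (op K) := rfl
    rw [this]; simp only [CategoryTheory.Functor.map_id]; infer_instance
  | succ k hk ih =>
    have : (homOfLE (hk.trans (Nat.le_succ k))).op = (homOfLE (Nat.le_succ k)).op ≫
      (homOfLE hk).op := rfl
    rw [this, Functor.map_comp, Functor.map_comp]
    have := hX k hk
    infer_instance

lemma lemmaE {n : ℕ} (hA : AB4StarMinus A n) (X : ℕᵒᵖ ⥤ DerivedCategory A)
    (hb : ∀ k, Bb (X.obj (op k)))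
    (hX : ∀ (k : ℕ) (m : ℤ), -(k : ℤ) ≤ m → IsIso ((homologyFunctor A m).map (tr X k)))
    [HasProduct (fun k => X.obj (op k))] {L : DerivedCategory A}
    (i : L ⟶ ∏ᶜ fun k => X.obj (op k)) (h : (∏ᶜ fun k => X.obj (op k)) ⟶ L⟦(1 : ℤ)⟧)
    (hT : Triangle.mk i (dif X) h ∈ distTriang _) (K : ℕ) (m : ℤ) (hm : n + 2 - (K : ℤ) ≤ m) :
    IsIso ((homologyFunctor A m).map (i ≫ Pi.π _ K)) := by
  let T : ℕᵒᵖ ⥤ DerivedCategory A := (minFun K).op ⋙ X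
  let a' : ∀ k, X.obj (op k) ⟶ T.obj (op k) := fun k =>
    X.map (homOfLE (min_le_left k K)).op
  have hbT : ∀ k, Bb (T.obj (op k)) := fun k => hb (min k K)
  have pT : HasProduct (fun k => T.obj (op k)) := hasProduct_of_bb _ hbT
  have hnat : ∀ k, a' (k + 1) ≫ tr T k = tr X k ≫ a' k := by
    intro k
    exact (X.map_comp _ _).symm.trans
      (X.map_comp (homOfLE (Nat.le_succ k)).op (homOfLE (min_le_left k K)).op)
  let a := Limits.Pi.map a'
  have had : a ≫ dif T = dif X ≫ a := by
    refine Pi.hom_ext _ _ fun k => ?_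
    simp [a, dif_π, reassoc_of% dif_π, hnat]
  have hTi : ∀ k, K ≤ k → IsIso (tr T k) := by
    intro k hk
    have e1 : min k K = K := by lia
    have e2 : min (k + 1) K = K := by lia
    have : IsIso ((minFun K).op.map (homOfLE (Nat.le_succ k)).op) := by
      refine ⟨(homOfLE (show min (k+1) K ≤ min k K by lia)).op, rfl, rfl⟩
    exact Functor.map_isIso X ((minFun K).op.map (homOfLE (Nat.le_succ k)).op)
  have ha' : ∀ k m, -(K : ℤ) ≤ m → IsIso ((homologyFunctor A m).map (a' k)) := by
    intro k m hm
    by_cases hk : k ≤ K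
    · have : IsIso (homOfLE (min_le_left k K)).op :=
        ⟨(homOfLE (show k ≤ min k K by lia)).op, rfl, rfl⟩
      have h3 : IsIso (a' k) := Functor.map_isIso X (homOfLE (min_le_left k K)).op
      infer_instance
    · have h1 := tower_iso X m K (fun k hk => hX k m (by lia)) k (by lia)
      have : IsIso (homOfLE (show K ≤ min k K by lia)).op :=
        ⟨(homOfLE (show min k K ≤ K by lia)).op, rfl, rfl⟩
      let q : T.obj (op k) ⟶ X.obj (op K) := X.map (homOfLE (show K ≤ min k K by lia)).op
      have h3 : IsIso q := Functor.map_isIso X (homOfLE (show K ≤ min k K by lia)).op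
      have h2 : X.map (homOfLE (show K ≤ k by lia)).op = a' k ≫ q := X.map_comp _ _
      rw [h2, Functor.map_comp] at h1
      exact IsIso.of_isIso_comp_right _ ((homologyFunctor A m).map q)
  have ha : ∀ m, n + 1 - (K : ℤ) ≤ m → IsIso ((homologyFunctor A m).map a) := fun m hm =>
    pi_map_iso hA a' hb hbT (-(K : ℤ)) ha' m (by lia)
  obtain ⟨s, j, h1, h2, h3, h4⟩ := dif_split T K hTi
  have hepi : Epi ((homologyFunctor A (m - 1)).map (dif X)) := by
    have := ha (m - 1) (by lia)
    have e1 : Epi ((homologyFunctor A (m - 1)).map (dif T)) := by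
      have : Epi ((homologyFunctor A (m - 1)).map s ≫ (homologyFunctor A (m - 1)).map (dif T)) := by
        rw [← Functor.map_comp, h1, CategoryTheory.Functor.map_id]; infer_instance
      exact epi_of_epi ((homologyFunctor A (m - 1)).map s) _
    have e2 : (homologyFunctor A (m - 1)).map (dif X) = (homologyFunctor A (m - 1)).map a ≫
        (homologyFunctor A (m - 1)).map (dif T) ≫ inv ((homologyFunctor A (m - 1)).map a) := by
      rw [← Functor.map_comp_assoc, had]
      simp
    rw [e2]
    infer_instance
  have hmono : Mono ((homologyFunctor A m).map i) := 
    (HomologySequence.mono_homologyMap_mor₁_iff _ hT (m - 1) m (by lia)).2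
      ((HomologySequence.epi_homologyMap_mor₂_iff _ hT (m - 1) m (by lia)).1 hepi)
  have := ha m (by lia)
  have hz : i ≫ dif X = 0 := comp_distTriang_mor_zero₁₂ _ hT
  have hex : (ShortComplex.mk ((homologyFunctor A m).map i) ((homologyFunctor A m).map (dif X))
      (by rw [← Functor.map_comp, hz, Functor.map_zero])).Exact := HomologySequence.exact₂ _ hT m
  have key := abstract_iso hex ((homologyFunctor A m).map a)
    ((homologyFunctor A m).map (dif T)) ((homologyFunctor A m).map s)
    (by rw [← Functor.map_comp, had, Functor.map_comp])
    ((homologyFunctor A m).map j) ((homologyFunctor A m).map (Pi.π _ K))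
    (by rw [← Functor.map_comp, h2, Functor.map_zero])
    (by rw [← Functor.map_comp, h3, CategoryTheory.Functor.map_id])
    (by rw [← Functor.map_comp, ← Functor.map_comp, ← Functor.map_add, h4, CategoryTheory.Functor.map_id])
  have key' : IsIso ((homologyFunctor A m).map (i ≫ Pi.π _ K ≫ a' K)) := by
    have e : i ≫ Pi.π (fun k => X.obj (op k)) K ≫ a' K = i ≫ a ≫ Pi.π _ K := by simp [a]
    rw [e, Functor.map_comp, Functor.map_comp]
    exact key
  have : IsIso ((homologyFunctor A m).map (a' K)) := ha' K m (by lia)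
  rw [← Category.assoc, Functor.map_comp] at key'
  exact IsIso.of_isIso_comp_right _ ((homologyFunctor A m).map (a' K))
end
end USS

namespace USS

open DerivedCategory Pretriangulated Opposite

section
variable {C : Type u} [Category.{v} C] [Abelian C] [HasDerivedCategory.{w} C]
    {M : Type u'} [Category.{v'} M] [Abelian M] [HasDerivedCategory.{w'} M]
    {F : C ⥤ M} [F.Additive]
    {Φ : DerivedCategory C ⥤ DerivedCategory M} [Φ.CommShift ℤ] [Φ.IsTriangulated]

lemma exists_tower (θ : ∀ k, Φ ⋙ homologyFunctor M k ≅ homologyFunctor C k ⋙ F)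
    (hD : ∀ (b : ℤ) (Y : DerivedCategory M) (_ : Y.IsGE b)
      (_ : ∀ k, F.essImage ((homologyFunctor M k).obj Y)),
      ∃ (X : DerivedCategory C), X.IsGE b ∧ WW Φ X ∧ Nonempty (Φ.obj X ≅ Y))
    (Y : DerivedCategory M) (hk : ∀ k, F.essImage ((homologyFunctor M k).obj Y)) :
    ∃ (X : ℕᵒᵖ ⥤ DerivedCategory C) (p : ∀ k, Y ⟶ Φ.obj (X.obj (op k))),
      (∀ k : ℕ, (X.obj (op k)).IsGE (-(k : ℤ))) ∧ (∀ k, WW Φ (X.obj (op k))) ∧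
      (∀ k, p (k + 1) ≫ Φ.map (tr X k) = p k) ∧
      ∀ (k : ℕ) (m : ℤ), -(k : ℤ) ≤ m → IsIso ((homologyFunctor M m).map (p k)) := by
  have step : ∀ k : ℕ, ∃ (S : DerivedCategory M) (X : DerivedCategory C) (f : S ⟶ Y)
      (p : Y ⟶ Φ.obj X) (h : Φ.obj X ⟶ S⟦(1 : ℤ)⟧), S.IsLE (-(k : ℤ) - 1) ∧ X.IsGE (-(k : ℤ)) ∧
      WW Φ X ∧ Triangle.mk f p h ∈ distTriang _ := by
    intro k
    obtain ⟨S, B, hS, hB, f, g, h, hT⟩ :=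
      TStructure.t.exists_triangle Y (-(k : ℤ) - 1) (-(k : ℤ)) (by lia)
    have hS' : S.IsLE (-(k : ℤ) - 1) := ⟨hS⟩
    have hB' : B.IsGE (-(k : ℤ)) := ⟨hB⟩
    have hkB : ∀ m, F.essImage ((homologyFunctor M m).obj B) := by
      intro m
      by_cases hm : -(k : ℤ) ≤ m
      · have : IsIso ((homologyFunctor M m).map g) := isIso_H_mor₂ hT m (m + 1) rfl
          (isZero_of_isLE S (-(k : ℤ) - 1) _ (by lia))
          (isZero_of_isLE S (-(k : ℤ) - 1) _ (by lia))
        exact F.essImage.prop_of_iso (asIso ((homologyFunctor M m).map g)) (hk m)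
      · refine ⟨(HasZeroObject.zero (C := C)).choose, ⟨?_⟩⟩
        exact (F.map_isZero (HasZeroObject.zero (C := C)).choose_spec).iso
          (isZero_of_isGE B (-(k : ℤ)) m (by lia))
    obtain ⟨X, hX, hW, ⟨e⟩⟩ := hD _ B hB' hkB
    refine ⟨S, X, f, g ≫ e.inv, e.hom ≫ h, hS', hX, hW, ?_⟩
    have h1 : f ≫ 𝟙 Y = 𝟙 S ≫ f := by simp
    have h2 : (g ≫ e.inv) ≫ e.hom = 𝟙 Y ≫ g := by simp
    have h3 : (e.hom ≫ h) ≫ (𝟙 S)⟦(1 : ℤ)⟧' = e.hom ≫ h := by simp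
    exact isomorphic_distinguished _ hT _
      (Triangle.isoMk _ _ (Iso.refl _) (Iso.refl _) e h1 h2 h3)
  choose S X f p h hS hX hW hT using step
  have hg : ∀ k, ∃ g : X (k + 1) ⟶ X k, p (k + 1) ≫ Φ.map g = p k := by
    intro k
    have z : f (k + 1) ≫ p k = 0 := by
      have := hS (k + 1)
      have := hX k
      have := isGE_map θ (X k) (-(k : ℤ))
      exact TStructure.t.zero _ (-((k + 1 : ℕ) : ℤ) - 1) (-(k : ℤ)) (by push_cast; lia)
    obtain ⟨g', hg'⟩ : ∃ g' : Φ.obj (X (k + 1)) ⟶ Φ.obj (X k), p k = p (k + 1) ≫ g' :=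
      Triangle.yoneda_exact₂ _ (hT (k + 1)) (p k) z
    obtain ⟨g, hg⟩ := (hW k (X (k + 1))).2 g'
    dsimp only at hg
    exact ⟨g, by rw [hg, hg']⟩
  choose g hg using hg
  refine ⟨Functor.ofOpSequence g, p, hX, hW, ?_, ?_⟩
  · intro k
    have : tr (Functor.ofOpSequence g) k = g k := Functor.ofOpSequence_map_homOfLE_succ g k
    rw [this]
    exact hg k
  · intro k m hm
    have := hS k
    exact isIso_H_mor₂ (hT k) m (m + 1) rfl
          (isZero_of_isLE (S k) (-(k : ℤ) - 1) _ (by lia))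
          (isZero_of_isLE (S k) (-(k : ℤ) - 1) _ (by lia))

lemma univ_pi [Φ.Additive] (X : ℕ → DerivedCategory C) (hW : ∀ k, WW Φ (X k)) [HasProduct X]
    [HasProduct (fun k => Φ.obj (X k))] : Univ Φ (piComparison Φ X) := by
  intro Z
  constructor
  · intro f g h
    refine Pi.hom_ext _ _ fun k => (hW k Z).1 ?_
    have := congr($h ≫ Pi.π _ k)
    dsimp only at this ⊢
    simpa using this
  · intro y
    choose x hx using fun k => (hW k Z).2 (y ≫ Pi.π _ k)
    refine ⟨Pi.lift x, ?_⟩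
    dsimp only at hx ⊢
    refine Pi.hom_ext _ _ fun k => ?_
    rw [← hx, Category.assoc, piComparison_comp_π, ← Functor.map_comp, Pi.lift_π]

lemma core [EnoughInjectives C] [HasProducts.{0} C] [EnoughInjectives M] [HasProducts.{0} M]
    [F.ReflectsIsomorphisms]
    (θ : ∀ k, Φ ⋙ homologyFunctor M k ≅ homologyFunctor C k ⋙ F)
    (hD : ∀ (b : ℤ) (Y : DerivedCategory M) (_ : Y.IsGE b)
      (_ : ∀ k, F.essImage ((homologyFunctor M k).obj Y)),
      ∃ (X : DerivedCategory C), X.IsGE b ∧ WW Φ X ∧ Nonempty (Φ.obj X ≅ Y))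
    {n : ℕ} (hC : AB4StarMinus C n) (hM : AB4StarMinus M n)
    (Y : DerivedCategory M) (hk : ∀ k, F.essImage ((homologyFunctor M k).obj Y)) :
    ∃ L : DerivedCategory C, WW Φ L ∧ Nonempty (Φ.obj L ≅ Y) := by
  obtain ⟨X, p, hX, hW, hp, hpi⟩ := exists_tower θ hD Y hk
  have hX' : ∀ k : ℕ, (Φ.obj (X.obj (op k))).IsGE (-(k : ℤ)) := fun k => by
    have := hX k
    exact isGE_map θ _ _
  have hi' : ∀ (k : ℕ) (m : ℤ), -(k : ℤ) ≤ m →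
      IsIso ((homologyFunctor M m).map (Φ.map (tr X k))) := by
    intro k m hm
    have h1 := hpi k m hm
    have h2 := hpi (k + 1) m (by push_cast; lia)
    rw [← hp k, Functor.map_comp] at h1
    exact IsIso.of_isIso_comp_left ((homologyFunctor M m).map (p (k + 1))) _
  have hi : ∀ (k : ℕ) (m : ℤ), -(k : ℤ) ≤ m →
      IsIso ((homologyFunctor C m).map (tr X k)) := fun k m hm =>
    (isIso_homology_iff θ _ m).1 (hi' k m hm)
  have q : HasProduct (fun k => X.obj (op k)) := hasProduct_of_bb _ fun k => ⟨_, hX k⟩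
  have q' : HasProduct (fun k => (X ⋙ Φ).obj (op k)) :=
    hasProduct_of_bb (fun k => Φ.obj (X.obj (op k))) fun k => ⟨_, hX' k⟩
  have q'' : HasProduct (fun k => Φ.obj (X.obj (op k))) := q'
  let β : Φ.obj (∏ᶜ fun k => X.obj (op k)) ⟶ ∏ᶜ fun k => (X ⋙ Φ).obj (op k) :=
    piComparison Φ (fun k => X.obj (op k))
  have hβ : Univ Φ β := univ_pi (fun k => X.obj (op k)) hW
  have hβπ : ∀ k, β ≫ Pi.π (fun k => (X ⋙ Φ).obj (op k)) k =
      Φ.map (Pi.π (fun k => X.obj (op k)) k) := fun k => piComparison_comp_π _ _ _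
  have htr : ∀ k, tr (X ⋙ Φ) k = Φ.map (tr X k) := fun k => rfl
  have hβd : Φ.map (dif X) ≫ β = β ≫ dif (X ⋙ Φ) := by
    refine Pi.hom_ext _ _ fun k => ?_
    rw [Category.assoc, Category.assoc, hβπ, dif_π, ← Functor.map_comp, dif_π,
      Preadditive.comp_sub, ← Category.assoc β, hβπ, hβπ, htr, Functor.map_sub, Functor.map_comp]
  obtain ⟨L, i, h, hT⟩ := distinguished_cocone_triangle₁ (dif X)
  obtain ⟨L', i', h', hT'⟩ := distinguished_cocone_triangle₁ (dif (X ⋙ Φ))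
  obtain ⟨α, hα1, hα2⟩ : ∃ α : Φ.obj L ⟶ L', Φ.map i ≫ β = α ≫ i' ∧
      (Φ.map h ≫ (Φ.commShiftIso (1 : ℤ)).hom.app L) ≫ α⟦(1 : ℤ)⟧' = β ≫ h' :=
    complete_distinguished_triangle_morphism₁ _ _ (Φ.map_distinguished _ hT) hT' β β hβd
  have hα : Univ Φ α := univ₁ hT hT' α β β hα1 hβd (by
    rw [← Category.assoc]; exact hα2) hβ hβ
  have E := lemmaE hC X (fun k => ⟨_, hX k⟩) hi i h hT
  have E' := lemmaE hM (X ⋙ Φ) (fun k => ⟨_, hX' k⟩) hi' i' h' hT'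
  have iα : IsIso α := by
    rw [DerivedCategory.isIso_iff]
    intro m
    let K : ℕ := (n + 2 - m).toNat
    have hK : n + 2 - (K : ℤ) ≤ m := by lia
    have e1 := (isIso_homology_iff θ _ m).2 (E K m hK)
    have e2 := E' K m hK
    have e3 : Φ.map (i ≫ Pi.π (fun k => X.obj (op k)) K) =
        α ≫ (i' ≫ Pi.π (fun k => (X ⋙ Φ).obj (op k)) K) := by
      rw [Functor.map_comp, ← hβπ, reassoc_of% hα1]
    have e4 : IsIso ((homologyFunctor M m).map α ≫ (homologyFunctor M m).map
        (i' ≫ Pi.π (fun k => (X ⋙ Φ).obj (op k)) K)) := by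
      rw [← Functor.map_comp]
      exact e3 ▸ e1
    exact IsIso.of_isIso_comp_right _ ((homologyFunctor M m).map
        (i' ≫ Pi.π (fun k => (X ⋙ Φ).obj (op k)) K))
  let p' : ∀ k, Y ⟶ (X ⋙ Φ).obj (op k) := p
  let y : Y ⟶ ∏ᶜ fun k => (X ⋙ Φ).obj (op k) := Pi.lift p'
  have hy : y ≫ dif (X ⋙ Φ) = 0 := by
    refine Pi.hom_ext _ _ fun k => ?_
    rw [Category.assoc, dif_π, Preadditive.comp_sub, ← Category.assoc, zero_comp]
    dsimp only [y]
    rw [Pi.lift_π, Pi.lift_π, sub_eq_zero]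
    exact (hp k).symm
  obtain ⟨z, hz⟩ : ∃ z : Y ⟶ L', y = z ≫ i' := Triangle.coyoneda_exact₂ _ hT' y hy
  have iz : IsIso z := by
    rw [DerivedCategory.isIso_iff]
    intro m
    let K : ℕ := (n + 2 - m).toNat
    have hK : n + 2 - (K : ℤ) ≤ m := by lia
    have e1 := hpi K m (by lia)
    have e2 := E' K m hK
    have e3 : p' K = z ≫ (i' ≫ Pi.π (fun k => (X ⋙ Φ).obj (op k)) K) := by
      rw [← Category.assoc, ← hz, Pi.lift_π]
    have e4 : IsIso ((homologyFunctor M m).map z ≫ (homologyFunctor M m).map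
        (i' ≫ Pi.π (fun k => (X ⋙ Φ).obj (op k)) K)) := by
      rw [← Functor.map_comp, ← e3]
      exact e1
    exact IsIso.of_isIso_comp_right _ ((homologyFunctor M m).map
        (i' ≫ Pi.π (fun k => (X ⋙ Φ).obj (op k)) K))
  exact ⟨L, hα.ww, ⟨asIso α ≪≫ (asIso z).symm⟩⟩
end
end USS

open USS in
theorem unbounded_equivalence_of_strong_serre
    {C : Type u} [Category.{v} C] [Abelian C] [EnoughInjectives C] [HasProducts.{0} C]
    [HasDerivedCategory.{w} C]
    {M : Type u'} [Category.{v'} M] [Abelian M] [EnoughInjectives M] [HasProducts.{0} M]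
    [HasDerivedCategory.{w'} M]
    (F : C ⥤ M) [F.Additive] [PreservesFiniteLimits F] [PreservesFiniteColimits F]
    [F.Full] [F.Faithful] (G : M ⥤ C) (adj : F ⊣ G)
    (hF : IsStrongSerre F)
    (n : ℕ) (hC : AB4StarMinus C n) (hM : AB4StarMinus M n) :
    (∀ X Y : DerivedCategory C,
        Function.Bijective (fun f : X ⟶ Y => F.mapDerivedCategory.map f)) ∧
      (∀ Y : DerivedCategory M,
        (∀ k : ℤ, F.essImage ((DerivedCategory.homologyFunctor M k).obj Y)) →
        ∃ X : DerivedCategory C, Nonempty (F.mapDerivedCategory.obj X ≅ Y)) := by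
  have hU : ∀ (Y : DerivedCategory M) (b : ℤ) (_ : Y.IsGE b),
      ∃ (X : DerivedCategory C) (ε : F.mapDerivedCategory.obj X ⟶ Y),
        Univ F.mapDerivedCategory ε := fun Y b _ => exists_univ adj Y b
  have hS := single_ww (theta F) (FB_single hF) hU
  have hS' : ∀ (i : ℤ) (c : C), Nonempty (F.mapDerivedCategory.obj
      ((DerivedCategory.singleFunctor C i).obj c) ≅
      (DerivedCategory.singleFunctor M i).obj (F.obj c)) := fun i c =>
    ⟨(F.mapDerivedCategorySingleFunctor i).app c⟩
  have hD := lemmaD' (theta F) hS hS' hU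
  have key := core (theta F) hD hC hM
  refine ⟨fun X Y => ?_, fun Y hY => ?_⟩
  · obtain ⟨L, hL, ⟨e⟩⟩ := key (F.mapDerivedCategory.obj Y)
      (fun k => ⟨_, ⟨((theta F k).app Y).symm⟩⟩)
    obtain ⟨η, hη⟩ := (hL Y).2 e.inv
    dsimp only at hη
    have h1 : IsIso (F.mapDerivedCategory.map η) := by rw [hη]; infer_instance
    have h2 : IsIso η := isIso_of_isIso_map (theta F) η
    exact hL.of_iso (asIso η).symm X
  · obtain ⟨L, -, hL⟩ := key Y hY
    exact ⟨L, hL⟩
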